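/- Let G be a finite abelian group with exp(G) = n, and let G₀ ⊆ G be a minimal non-half-factorial LCN-set with min Δ(G₀) = max Δ*(G). Then every atom A over G₀ with cross number k(A) = 1 satisfies |supp(A)| ≤ n/2. -/

import Mathlib

open Multiset

section Defs

variable {G : Type*} [AddCommGroup G]

/-- `S` is a zero-sum sequence over `G₀`: a multiset with entries in `G₀` and sum `0`. -/
def IsZeroSumSeq (G₀ : Set G) (S : Multiset G) : Prop :=
  (∀ x ∈ S, x ∈ G₀) ∧ S.sum = 0

/-- `S` is an atom over `G₀`: a nonempty zero-sum sequence over `G₀` that is not the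
union of two nonempty zero-sum sequences over `G₀`. -/
def IsAtomSeq (G₀ : Set G) (S : Multiset G) : Prop :=
  IsZeroSumSeq G₀ S ∧ S ≠ 0 ∧
    ∀ A B : Multiset G, IsZeroSumSeq G₀ A → IsZeroSumSeq G₀ B →
      A ≠ 0 → B ≠ 0 → S ≠ A + B

/-- The set of lengths of `B`: all `k` such that `B` is a union of `k` atoms over `G₀`. -/
def LengthSet (G₀ : Set G) (B : Multiset G) : Set ℕ :=
  {k | ∃ l : Multiset (Multiset G), Multiset.card l = k ∧
      (∀ A ∈ l, IsAtomSeq G₀ A) ∧ l.sum = B}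

/-- The set of successive distances of a set of naturals. -/
def DeltaOf (L : Set ℕ) : Set ℕ :=
  {d | ∃ x ∈ L, ∃ y ∈ L, x < y ∧ y - x = d ∧ ∀ z ∈ L, ¬(x < z ∧ z < y)}

/-- The set of distances `Δ(G₀)`. -/
def DeltaSet (G₀ : Set G) : Set ℕ :=
  {d | ∃ B : Multiset G, IsZeroSumSeq G₀ B ∧ B ≠ 0 ∧ d ∈ DeltaOf (LengthSet G₀ B)}

/-- `G₀` is half-factorial if `Δ(G₀) = ∅`. -/
def IsHalfFactorialSet (G₀ : Set G) : Prop := DeltaSet G₀ = ∅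

/-- `G₀` is minimal non-half-factorial if `Δ(G₀) ≠ ∅` and every proper subset is
half-factorial. -/
def IsMinNonHalfFactorial (G₀ : Set G) : Prop :=
  (DeltaSet G₀).Nonempty ∧ ∀ G₁ : Set G, G₁ ⊂ G₀ → DeltaSet G₁ = ∅

/-- The cross number `k(S) = Σ 1/ord(g)` of a multiset over `G`. -/
noncomputable def crossNumber (S : Multiset G) : ℚ :=
  (S.map (fun g => ((addOrderOf g : ℚ))⁻¹)).sum

/-- `G₀` is an LCN-set if every atom over `G₀` has cross number at least 1. -/
def IsLCNSet (G₀ : Set G) : Prop :=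
  ∀ U : Multiset G, IsAtomSeq G₀ U → 1 ≤ crossNumber U

/-- A subset of `G \ {0}` is independent if any integral linear relation on its elements
has all summands zero. -/
def IsIndependentSet (E : Set G) : Prop :=
  (0 : G) ∉ E ∧ ∀ s : Finset G, ↑s ⊆ E → ∀ f : G → ℤ,
    (∑ e ∈ s, f e • e) = 0 → ∀ e ∈ s, f e • e = 0

/-- `d` is a greatest common divisor of the set `S` of naturals. -/
def IsSetGcd (S : Set ℕ) (d : ℕ) : Prop :=
  (∀ s ∈ S, d ∣ s) ∧ ∀ e : ℕ, (∀ s ∈ S, e ∣ s) → e ∣ d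

end Defs

/-- The set of minimal distances `Δ*(G)`. -/
def DeltaStar (G : Type*) [AddCommGroup G] : Set ℕ :=
  {d | ∃ G₀ : Set G, (DeltaSet G₀).Nonempty ∧ d = sInf (DeltaSet G₀)}

/-- The `p`-rank of a finite abelian group: `log_p` of the order of the `p`-torsion
subgroup `{x | p • x = 0}`. -/
noncomputable def pRank (G : Type*) [AddCommGroup G] (p : ℕ) : ℕ :=
  Nat.log p (Nat.card {x : G // p • x = 0})

/-- The rank of a finite abelian group: the maximum of the `p`-ranks over all primes. -/
noncomputable def rankG (G : Type*) [AddCommGroup G] : ℕ :=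
  sSup {r : ℕ | ∃ p : ℕ, p.Prime ∧ r = pRank G p}

/-!
If `ord g = n > 2`, every distance of `{g, -g}` is a multiple of `n - 2`, so `n - 2 ≤ max Δ*(G)`
and the hypothesis gives `n ≤ d + 2` with `d = min Δ(G₀)`. If
`k(A) = 1`, then `|A| ≤ n * k(A) = n ≤ d + 2`.

Suppose some `h` occurs exactly once in `A`, and let `W` be an atom with `k(W) > 1`. By minimality,
all atoms avoiding `h` have cross number `1`, and for a suitable `j` the sequence `j A + W` factors
into atoms of cross number `1`; there are `j + k(W) > j + 1` of them. Take the least `j` such that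
`j A + W` has a factorization of more than `j + 1` atoms. This factorization has at least
`j + 1 + d` of them, while those of `(j - 1) A + W` have at most `j`, so removing `A` from any part
of it costs more than `d` atoms. At most `|A| ≤ d + 2` atoms suffice to cover `A`; hence what they
leave after removing `A` is a single atom `V`, and no fewer than `d + 2` atoms cover `A`. Since
`k(V) > 1`, minimality of `G₀` forces `V` to have full support. An atom of the family sharing two
terms with `A` would allow a smaller cover, and this makes `A` squarefree; so `A` divides `V`, which
is absurd. Thus all multiplicities in `A` are at least `2`, and `2 |supp(A)| ≤ |A| ≤ n`.
-/

section Multisets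

variable {α : Type*} {A U : Multiset α} {l : Multiset (Multiset α)}

lemma sum_map_multiset_sum {M : Type*} [AddCommMonoid M] (w : α → M) (l : Multiset (Multiset α)) :
    (l.sum.map w).sum = (l.map fun U => (U.map w).sum).sum :=
  map_multiset_sum (sumAddMonoidHom.comp (mapAddMonoidHom w)) l

lemma card_sub_add_card_inter [DecidableEq α] (A U : Multiset α) :
    card (A - U) + card (A ∩ U) = card A := by
  rw [← card_add, sub_add_inter]

lemma exists_subfamily_card_le (hA : A ≤ l.sum) : ∃ l' ≤ l, card l' ≤ card A ∧ A ≤ l'.sum := by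
  classical
  induction l using Multiset.induction generalizing A with
  | empty => exact ⟨0, le_rfl, Nat.zero_le _, hA⟩
  | cons U l ih =>
    rw [sum_cons, ← tsub_le_iff_left] at hA
    obtain ⟨l', hle, hcard, hcover⟩ := ih hA
    rcases eq_or_ne (A ∩ U) 0 with hinter | hinter
    · rw [← add_zero (A - U), ← hinter, sub_add_inter] at hcard hcover
      exact ⟨l', hle.trans (le_cons_self l U), hcard, hcover⟩
    · refine ⟨U ::ₘ l', cons_le_cons U hle, ?_, by rwa [sum_cons, ← tsub_le_iff_left]⟩
      have hpos := card_pos.2 hinter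
      have hsplit := card_sub_add_card_inter A U
      rw [card_cons]
      omega

lemma exists_subfamily_card_add_card_inter_le [DecidableEq α] (hA : A ≤ l.sum) (hU : U ∈ l) :
    ∃ l' ≤ l, card l' + card (A ∩ U) ≤ card A + 1 ∧ A ≤ l'.sum := by
  obtain ⟨s, rfl⟩ := exists_cons_of_mem hU
  rw [sum_cons, ← tsub_le_iff_left] at hA
  obtain ⟨l', hle, hcard, hcover⟩ := exists_subfamily_card_le hA
  refine ⟨U ::ₘ l', cons_le_cons U hle, ?_, by rwa [sum_cons, ← tsub_le_iff_left]⟩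
  have hsplit := card_sub_add_card_inter A U
  rw [card_cons]
  omega

lemma two_mul_card_toFinset_le_card [DecidableEq α] (hA : ∀ g ∈ A, 2 ≤ count g A) :
    2 * A.toFinset.card ≤ card A := by
  rw [← toFinset_sum_count_eq, mul_comm, ← smul_eq_mul]
  exact Finset.card_nsmul_le_sum _ _ _ fun g hg => hA g (mem_toFinset.1 hg)

end Multisets

section Factorization

variable {G : Type*} [AddCommGroup G] {G₀ G₁ : Set G} {B S T U : Multiset G}
  {l t : Multiset (Multiset G)}

/-- The monoid `B(G₀)` of zero-sum sequences over `G₀`, as a submonoid of all multisets; it provides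
closure under sums and multiples. -/
def zeroSumMonoid (G₀ : Set G) : AddSubmonoid (Multiset G) where
  carrier := {S | IsZeroSumSeq G₀ S}
  zero_mem' := by simp [IsZeroSumSeq]
  add_mem' hS hT :=
    ⟨fun x hx => (mem_add.1 hx).elim (hS.1 x) (hT.1 x), by rw [sum_add, hS.2, hT.2, add_zero]⟩

/-- `l` is a factorization of `B` over `G₀`: a multiset of atoms whose union is `B`. -/
def IsFactorization (G₀ : Set G) (l : Multiset (Multiset G)) (B : Multiset G) : Prop :=
  (∀ U ∈ l, IsAtomSeq G₀ U) ∧ l.sum = B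

lemma IsZeroSumSeq.of_add (h : IsZeroSumSeq G₀ (S + T)) (hS : S.sum = 0) : IsZeroSumSeq G₀ T :=
  ⟨fun x hx => h.1 x (mem_add.2 (.inr hx)), by simpa [hS] using h.2⟩

lemma isAtomSeq_iff_forall_le : IsAtomSeq G₀ U ↔
    IsZeroSumSeq G₀ U ∧ U ≠ 0 ∧ ∀ S ≤ U, S ≠ 0 → S.sum = 0 → S = U := by
  refine and_congr_right fun hU => and_congr_right fun _ => ⟨fun h S hle hS₀ hS => ?_, ?_⟩
  · obtain ⟨T, rfl⟩ := Multiset.le_iff_exists_add.1 hle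
    by_contra hne
    have hT₀ : T ≠ 0 := by rintro rfl; exact hne (add_zero S).symm
    exact h S T ⟨fun x hx => hU.1 x (mem_add.2 (.inl hx)), hS⟩ (hU.of_add hS) hS₀ hT₀ rfl
  · rintro h S T hS - hS₀ hT₀ rfl
    exact hT₀ (by simpa using h S (le_add_right S T) hS₀ hS.2)

lemma IsAtomSeq.eq_of_le (hU : IsAtomSeq G₀ U) (hle : S ≤ U) (hS₀ : S ≠ 0) (hS : S.sum = 0) :
    S = U :=
  (isAtomSeq_iff_forall_le.1 hU).2.2 S hle hS₀ hS

lemma IsAtomSeq.of_forall_mem (hU : IsAtomSeq G₁ U) (h : ∀ x ∈ U, x ∈ G₀) : IsAtomSeq G₀ U :=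
  isAtomSeq_iff_forall_le.2 ⟨⟨h, hU.1.2⟩, hU.2.1, fun _ => hU.eq_of_le⟩

lemma isAtomSeq_replicate_addOrderOf {x : G} (hx : x ∈ G₀) (hfin : IsOfFinAddOrder x) :
    IsAtomSeq G₀ (replicate (addOrderOf x) x) := by
  refine isAtomSeq_iff_forall_le.2 ⟨⟨fun y hy => eq_of_mem_replicate hy ▸ hx, ?_⟩, ?_, ?_⟩
  · rw [sum_replicate, addOrderOf_nsmul_eq_zero]
  · exact card_pos.1 (by simpa using hfin.addOrderOf_pos)
  · intro S hle hS₀ hS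
    obtain ⟨k, hk, rfl⟩ := le_replicate_iff.1 hle
    rw [sum_replicate] at hS
    have hk₀ : 0 < k := by simpa using card_pos.2 hS₀
    rw [hk.antisymm (Nat.le_of_dvd hk₀ (addOrderOf_dvd_of_nsmul_eq_zero hS))]

lemma IsAtomSeq.eq_replicate_addOrderOf {x : G} (hU : IsAtomSeq {x} U) :
    U = replicate (addOrderOf x) x := by
  obtain ⟨k, rfl⟩ : ∃ k, U = replicate k x := ⟨card U, eq_replicate_card.2 hU.1.1⟩
  have hk : 0 < k := by simpa using card_pos.2 hU.2.1
  have hdvd : addOrderOf x ∣ k := addOrderOf_dvd_of_nsmul_eq_zero (by simpa using hU.1.2)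
  refine (hU.eq_of_le ((replicate_le_replicate x).2 (Nat.le_of_dvd hk hdvd)) ?_ ?_).symm
  · exact card_pos.1 (by simpa using Nat.pos_of_dvd_of_pos hdvd hk)
  · rw [sum_replicate, addOrderOf_nsmul_eq_zero]

lemma IsFactorization.isZeroSumSeq (hl : IsFactorization G₀ l B) : IsZeroSumSeq G₀ B :=
  hl.2 ▸ (zeroSumMonoid G₀).multiset_sum_mem l fun U hU => (hl.1 U hU).1

lemma IsFactorization.add (hl : IsFactorization G₀ l S) (ht : IsFactorization G₀ t T) :
    IsFactorization G₀ (l + t) (S + T) :=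
  ⟨fun U hU => (mem_add.1 hU).elim (hl.1 U) (ht.1 U), by rw [sum_add, hl.2, ht.2]⟩

lemma IsFactorization.mono (h : G₁ ⊆ G₀) (hl : IsFactorization G₁ l B) :
    IsFactorization G₀ l B :=
  ⟨fun U hU => (hl.1 U hU).of_forall_mem fun x hx => h ((hl.1 U hU).1.1 x hx), hl.2⟩

lemma IsAtomSeq.isFactorization_replicate (hU : IsAtomSeq G₀ U) (k : ℕ) :
    IsFactorization G₀ (replicate k U) (k • U) :=
  ⟨fun _ hV => eq_of_mem_replicate hV ▸ hU, sum_replicate k U⟩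

lemma IsFactorization.eq_zero (hl : IsFactorization G₀ l 0) : l = 0 :=
  eq_zero_of_forall_notMem fun U hU =>
    (hl.1 U hU).2.1 (Multiset.le_zero.1 (hl.2 ▸ le_sum_of_mem hU))

lemma IsFactorization.eq_singleton (hl : IsFactorization G₀ l U) (hU : IsAtomSeq G₀ U) :
    l = {U} := by
  obtain ⟨V, hV⟩ : ∃ V, V ∈ l := exists_mem_of_ne_zero <| by
    rintro rfl
    exact hU.2.1 hl.2.symm
  obtain ⟨t, rfl⟩ := exists_cons_of_mem hV
  have hVU : V = U := hU.eq_of_le (hl.2 ▸ le_sum_of_mem hV) (hl.1 V hV).2.1 (hl.1 V hV).1.2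
  have ht : IsFactorization G₀ t 0 :=
    ⟨fun W hW => hl.1 W (mem_cons_of_mem hW), by simpa [hVU] using hl.2⟩
  rw [ht.eq_zero, hVU, cons_zero]

theorem IsZeroSumSeq.exists_isFactorization (hB : IsZeroSumSeq G₀ B) :
    ∃ l, IsFactorization G₀ l B := by
  induction B using Multiset.strongInductionOn with
  | ih B ih =>
    by_cases hB₀ : B = 0
    · exact ⟨0, by simp, by simp [hB₀]⟩
    by_cases hat : IsAtomSeq G₀ B
    · exact ⟨{B}, by simpa using hat, sum_singleton B⟩
    obtain ⟨S, T, hS, hT, hS₀, hT₀, rfl⟩ : ∃ S T, IsZeroSumSeq G₀ S ∧ IsZeroSumSeq G₀ T ∧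
        S ≠ 0 ∧ T ≠ 0 ∧ B = S + T := by
      simpa [IsAtomSeq, hB, hB₀] using hat
    obtain ⟨l, hl⟩ := ih S (lt_add_of_pos_right S (pos_iff_ne_zero.2 hT₀)) hS
    obtain ⟨t, ht⟩ := ih T (lt_add_of_pos_left T (pos_iff_ne_zero.2 hS₀)) hT
    exact ⟨l + t, hl.add ht⟩

end Factorization

section Distances

variable {G : Type*} [AddCommGroup G] {G₀ : Set G} {B : Multiset G} {d x y : ℕ}

lemma pos_of_mem_deltaSet (hd : d ∈ DeltaSet G₀) : 0 < d := by
  obtain ⟨_, _, _, x, _, y, _, hxy, rfl, _⟩ := hd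
  exact Nat.sub_pos_of_lt hxy

lemma sInf_deltaSet_pos (h : (DeltaSet G₀).Nonempty) : 0 < sInf (DeltaSet G₀) :=
  pos_of_mem_deltaSet (Nat.sInf_mem h)

lemma exists_mem_deltaSet_add_le (hx : x ∈ LengthSet G₀ B) (hy : y ∈ LengthSet G₀ B)
    (hxy : x < y) : ∃ d ∈ DeltaSet G₀, x + d ≤ y := by
  classical
  have hex : ∃ z, z ∈ LengthSet G₀ B ∧ x < z := ⟨y, hy, hxy⟩
  obtain ⟨hz, hxz⟩ := Nat.find_spec hex
  have hzy : Nat.find hex ≤ y := Nat.find_min' hex ⟨hy, hxy⟩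
  refine ⟨Nat.find hex - x, ⟨B, ?_, ?_, x, hx, Nat.find hex, hz, hxz, rfl, ?_⟩, by omega⟩
  · obtain ⟨l, -, hl⟩ := hx
    exact IsFactorization.isZeroSumSeq hl
  · rintro rfl
    obtain ⟨l, rfl, hl⟩ := hy
    simp [IsFactorization.eq_zero hl] at hxy
  · rintro z hz ⟨hxz, hlt⟩
    exact Nat.find_min hex hlt ⟨hz, hxz⟩

lemma add_sInf_deltaSet_le (hx : x ∈ LengthSet G₀ B) (hy : y ∈ LengthSet G₀ B) (hxy : x < y) :
    x + sInf (DeltaSet G₀) ≤ y := by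
  obtain ⟨d, hd, hle⟩ := exists_mem_deltaSet_add_le hx hy hxy
  exact (Nat.add_le_add_left (Nat.sInf_le hd) x).trans hle

lemma eq_of_mem_lengthSet (h : DeltaSet G₀ = ∅) (hx : x ∈ LengthSet G₀ B)
    (hy : y ∈ LengthSet G₀ B) : x = y := by
  by_contra hne
  rcases Nat.lt_or_gt_of_ne hne with hlt | hlt
  · obtain ⟨d, hd, -⟩ := exists_mem_deltaSet_add_le hx hy hlt
    simp [h] at hd
  · obtain ⟨d, hd, -⟩ := exists_mem_deltaSet_add_le hy hx hlt
    simp [h] at hd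

theorem addOrderOf_dvd_of_mem_deltaSet {M : Type*} [AddCancelCommMonoid M] {w : G → M} {c : M}
    (hw : ∀ U, IsAtomSeq G₀ U → (U.map w).sum = c) (hd : d ∈ DeltaSet G₀) :
    addOrderOf c ∣ d := by
  obtain ⟨B, -, -, x, ⟨l, rfl, hl⟩, y, ⟨t, rfl, ht⟩, hxy, rfl, -⟩ := hd
  have card_nsmul {s : Multiset (Multiset G)} (hs : IsFactorization G₀ s B) :
      card s • c = (B.map w).sum := by
    rw [← hs.2, sum_map_multiset_sum, map_congr rfl fun U hU => hw U (hs.1 U hU), map_const',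
      sum_replicate]
  exact (Nat.modEq_iff_dvd' hxy.le).1
    (nsmul_eq_nsmul_iff_modEq.1 ((card_nsmul hl).trans (card_nsmul ht).symm))

end Distances

section CrossNumber

variable {G : Type*} [AddCommGroup G] {G₀ : Set G} {U : Multiset G}

lemma crossNumber_add (S T : Multiset G) :
    crossNumber (S + T) = crossNumber S + crossNumber T := by
  rw [crossNumber, Multiset.map_add, sum_add, crossNumber, crossNumber]

lemma crossNumber_nsmul (k : ℕ) (S : Multiset G) : crossNumber (k • S) = k * crossNumber S := by
  rw [crossNumber, map_nsmul, sum_nsmul, nsmul_eq_mul, crossNumber]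

lemma crossNumber_sum (l : Multiset (Multiset G)) :
    crossNumber l.sum = (l.map crossNumber).sum :=
  sum_map_multiset_sum _ l

lemma crossNumber_sum_eq_card {l : Multiset (Multiset G)} (h : ∀ U ∈ l, crossNumber U = 1) :
    crossNumber l.sum = card l := by
  rw [crossNumber_sum, map_congr rfl h, map_const', sum_replicate, nsmul_one]

lemma card_le_crossNumber_sum {l : Multiset (Multiset G)} (h : ∀ U ∈ l, 1 ≤ crossNumber U) :
    (card l : ℚ) ≤ crossNumber l.sum := by
  rw [crossNumber_sum, ← card_map crossNumber, ← nsmul_one]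
  exact card_nsmul_le_sum (by simpa using h)

lemma crossNumber_replicate_addOrderOf {x : G} (hx : IsOfFinAddOrder x) :
    crossNumber (replicate (addOrderOf x) x) = 1 := by
  have hord : (addOrderOf x : ℚ) ≠ 0 := mod_cast hx.addOrderOf_pos.ne'
  rw [crossNumber, map_replicate, sum_replicate, nsmul_eq_mul, mul_inv_cancel₀ hord]

lemma card_le_exponent_mul_crossNumber (hG : AddMonoid.ExponentExists G) (S : Multiset G) :
    (card S : ℚ) ≤ AddMonoid.exponent G * crossNumber S := by
  rw [crossNumber, ← sum_map_mul_left, ← nsmul_one,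
    ← card_map fun x => (AddMonoid.exponent G : ℚ) * (addOrderOf x : ℚ)⁻¹]
  refine card_nsmul_le_sum fun r hr => ?_
  obtain ⟨x, -, rfl⟩ := mem_map.1 hr
  have hpos : (0 : ℚ) < addOrderOf x := mod_cast hG.addOrderOf_pos x
  rw [← div_eq_mul_inv, one_le_div hpos]
  exact mod_cast Nat.le_of_dvd hG.exponent_pos (AddMonoid.addOrder_dvd_exponent x)

lemma exists_isFactorization_nsmul {N : ℕ} (hU : ∀ x ∈ U, x ∈ G₀)
    (hfin : ∀ x ∈ U, IsOfFinAddOrder x) (hN : ∀ x ∈ U, addOrderOf x ∣ N) :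
    ∃ l, IsFactorization G₀ l (N • U) ∧ ∀ V ∈ l, crossNumber V = 1 := by
  induction U using Multiset.induction with
  | empty => exact ⟨0, ⟨by simp, by simp⟩, by simp⟩
  | cons x U ih =>
    simp only [forall_mem_cons] at hU hfin hN
    obtain ⟨l, hl, hcross⟩ := ih hU.2 hfin.2 hN.2
    obtain ⟨c, rfl⟩ := hN.1
    have hx := (isAtomSeq_replicate_addOrderOf hU.1 hfin.1).isFactorization_replicate c
    refine ⟨replicate c (replicate (addOrderOf x) x) + l, ?_, fun V hV => ?_⟩
    · rw [← singleton_add, nsmul_add, nsmul_singleton, mul_comm, ← nsmul_replicate, mul_comm]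
      exact hx.add hl
    · rcases mem_add.1 hV with hV | hV
      · rw [eq_of_mem_replicate hV, crossNumber_replicate_addOrderOf hfin.1]
      · exact hcross V hV

theorem IsAtomSeq.crossNumber_eq_one (h : DeltaSet G₀ = ∅) (hU : IsAtomSeq G₀ U)
    (hfin : ∀ x ∈ U, IsOfFinAddOrder x) : crossNumber U = 1 := by
  set N := (U.map addOrderOf).prod
  have hN : (N : ℚ) ≠ 0 := by
    refine Nat.cast_ne_zero.2 (prod_ne_zero fun h₀ => ?_)
    obtain ⟨x, hx, hx₀⟩ := mem_map.1 h₀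
    exact (hfin x hx).addOrderOf_pos.ne' hx₀
  obtain ⟨l, hl, hcross⟩ := exists_isFactorization_nsmul hU.1.1 hfin
    fun x hx => dvd_prod (mem_map_of_mem addOrderOf hx)
  have hcard : card l = N :=
    eq_of_mem_lengthSet h ⟨l, rfl, hl⟩ ⟨_, card_replicate N U, hU.isFactorization_replicate N⟩
  have hNk : N * crossNumber U = N := by
    rw [← crossNumber_nsmul, ← hl.2, crossNumber_sum_eq_card hcross, hcard]
  exact (mul_eq_left₀ hN).1 hNk

lemma exists_isAtomSeq_crossNumber_ne_one (h : (DeltaSet G₀).Nonempty) :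
    ∃ U, IsAtomSeq G₀ U ∧ crossNumber U ≠ 1 := by
  by_contra! hone
  obtain ⟨d, hd⟩ := h
  have hdvd : addOrderOf (1 : ℚ) ∣ d := addOrderOf_dvd_of_mem_deltaSet hone hd
  rw [addOrderOf_eq_zero (not_isOfFinAddOrder_of_isAddTorsionFree one_ne_zero),
    zero_dvd_iff] at hdvd
  exact (pos_of_mem_deltaSet hd).ne' hdvd

end CrossNumber

section PairNeg

variable {G : Type*} [AddCommGroup G] {g : G} {U : Multiset G} {d : ℕ}

lemma ne_neg_of_two_lt_addOrderOf (hg : 2 < addOrderOf g) : g ≠ -g := by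
  intro h
  have h2 : 2 • g = 0 := by rw [two_nsmul, ← eq_neg_iff_add_eq_zero, ← h]
  exact hg.not_ge (Nat.le_of_dvd two_pos (addOrderOf_dvd_of_nsmul_eq_zero h2))

lemma isAtomSeq_pair_neg (hg : g ≠ 0) : IsAtomSeq {g, -g} {g, -g} := by
  refine isAtomSeq_iff_forall_le.2 ⟨⟨by simp, by simp⟩, by simp, fun S hle hS₀ hS => ?_⟩
  refine eq_of_le_of_card_le hle ?_
  by_contra! hlt
  have hcard : card S = 1 := by
    have := card_pos.2 hS₀
    simp only [insert_eq_cons, card_cons, card_singleton] at hlt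
    omega
  obtain ⟨x, rfl⟩ := card_eq_one.1 hcard
  obtain rfl : x = 0 := by simpa using hS
  simp [hg, eq_comm] at hle

lemma IsAtomSeq.eq_of_pair_neg (hg : g ≠ -g) (hU : IsAtomSeq {g, -g} U) :
    U = {g, -g} ∨ U = replicate (addOrderOf g) g ∨ U = replicate (addOrderOf g) (-g) := by
  have hsupp : ∀ x ∈ U, x = g ∨ x = -g := hU.1.1
  by_cases hmem : g ∈ U
  · by_cases hneg : -g ∈ U
    · have hnodup : ({g, -g} : Multiset G).Nodup := by simpa using hg
      have hle : {g, -g} ≤ U := (le_iff_subset hnodup).2 (by simp [hmem, hneg])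
      exact .inl (hU.eq_of_le hle (by simp) (by simp)).symm
    · refine .inr (.inl (IsAtomSeq.eq_replicate_addOrderOf (hU.of_forall_mem fun x hx => ?_)))
      exact (hsupp x hx).resolve_right fun h => hneg (h ▸ hx)
  · refine .inr (.inr ?_)
    rw [← addOrderOf_neg]
    exact IsAtomSeq.eq_replicate_addOrderOf (hU.of_forall_mem fun x hx =>
      (hsupp x hx).resolve_left fun h => hmem (h ▸ hx))

lemma deltaSet_pair_neg_nonempty (hg : 2 < addOrderOf g) :
    (DeltaSet ({g, -g} : Set G)).Nonempty := by
  have hfin : IsOfFinAddOrder g := addOrderOf_pos_iff.1 (by omega)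
  have hg₀ : g ≠ 0 := by rintro rfl; simp at hg
  by_contra hempty
  have hone : crossNumber ({g, -g} : Multiset G) = 1 :=
    (isAtomSeq_pair_neg hg₀).crossNumber_eq_one (Set.not_nonempty_iff_eq_empty.1 hempty)
      (by simp [hfin])
  have hord : (addOrderOf g : ℚ) ≠ 0 := mod_cast hfin.addOrderOf_pos.ne'
  have htwo : (addOrderOf g : ℚ) = 2 := by
    simp only [crossNumber, insert_eq_cons, map_cons, map_singleton, sum_cons, sum_singleton,
      addOrderOf_neg] at hone
    field_simp at hone
    linarith
  exact hg.ne' (mod_cast htwo)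

-- Weigh `g` by `1` and `-g` by `n - 1`: the three kinds of atoms over `{g, -g}` then weigh `n`,
-- `n` and `n * (n - 1)`, which agree modulo `n * (n - 2)`.
lemma addOrderOf_sub_two_dvd_of_mem_deltaSet_pair_neg (hg : 2 < addOrderOf g)
    (hd : d ∈ DeltaSet ({g, -g} : Set G)) : addOrderOf g - 2 ∣ d := by
  classical
  obtain ⟨m, hm⟩ : ∃ m, addOrderOf g = m + 2 := ⟨addOrderOf g - 2, by omega⟩
  have hne := ne_neg_of_two_lt_addOrderOf hg
  set N := (m + 2) * m
  have hN : ((m + 2) * m : ZMod N) = 0 := mod_cast ZMod.natCast_self N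
  let w : G → ZMod N := fun x => if x = g then 1 else m + 1
  have hweight : ∀ U, IsAtomSeq ({g, -g} : Set G) U → (U.map w).sum = (m + 2 : ℕ) := by
    intro U hU
    rcases hU.eq_of_pair_neg hne with rfl | rfl | rfl
    · simp only [w, insert_eq_cons, map_cons, map_singleton, sum_cons, sum_singleton, if_true,
        hne.symm, if_false]
      push_cast
      ring
    · simp only [w, map_replicate, sum_replicate, if_true, nsmul_one, hm]
    · simp only [w, map_replicate, sum_replicate, hne.symm, if_false, nsmul_eq_mul, hm]
      push_cast
      linear_combination hN
  have hord : addOrderOf ((m + 2 : ℕ) : ZMod N) = m := by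
    rw [ZMod.addOrderOf_coe' N (Nat.succ_ne_zero _), Nat.gcd_eq_right (Nat.dvd_mul_right ..),
      Nat.mul_div_cancel_left m (Nat.succ_pos _)]
  rw [hm, Nat.add_sub_cancel]
  exact hord ▸ addOrderOf_dvd_of_mem_deltaSet hweight hd

theorem exponent_le_sSup_deltaStar_add_two (G : Type*) [AddCommGroup G] [Finite G] :
    AddMonoid.exponent G ≤ sSup (DeltaStar G) + 2 := by
  obtain ⟨g, hg⟩ := AddMonoid.exists_addOrderOf_eq_exponent (G := G)
    AddMonoid.ExponentExists.of_finite
  rcases le_or_gt (AddMonoid.exponent G) 2 with hsmall | hlarge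
  · exact hsmall.trans (Nat.le_add_left 2 _)
  rw [← hg] at hlarge ⊢
  have hbdd : BddAbove (DeltaStar G) := by
    refine ((Set.finite_range fun G₀ : Set G => sInf (DeltaSet G₀)).subset ?_).bddAbove
    rintro d ⟨G₀, -, rfl⟩
    exact ⟨G₀, rfl⟩
  have hnon := deltaSet_pair_neg_nonempty hlarge
  have hdvd := addOrderOf_sub_two_dvd_of_mem_deltaSet_pair_neg hlarge (Nat.sInf_mem hnon)
  have hle : addOrderOf g - 2 ≤ sSup (DeltaStar G) :=
    (Nat.le_of_dvd (sInf_deltaSet_pos hnon) hdvd).trans (le_csSup hbdd ⟨_, hnon, rfl⟩)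
  exact Nat.sub_le_iff_le_add.1 hle

end PairNeg

section RemovalCosts

variable {G : Type*} [AddCommGroup G] {G₀ : Set G} {A U V : Multiset G} {d : ℕ}
  {l l' : Multiset (Multiset G)}

/-- `l` is a family of atoms such that removing `A` from the union of any subfamily costs more
than `d` atoms, however the remainder `V` is refactored. -/
structure RemovalCosts (G₀ : Set G) (A : Multiset G) (d : ℕ) (l : Multiset (Multiset G)) :
    Prop where
  isAtomSeq : ∀ U ∈ l, IsAtomSeq G₀ U
  card_add_lt : ∀ l' ≤ l, ∀ V t, l'.sum = A + V → IsFactorization G₀ t V → card t + d < card l'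

namespace RemovalCosts

lemma exists_isFactorization (h : RemovalCosts G₀ A d l) (hd : 0 < d) (hA : IsAtomSeq G₀ A)
    (hle : l' ≤ l) (hV : l'.sum = A + V) :
    ∃ t, IsFactorization G₀ t V ∧ 0 < card t ∧ card t + d < card l' := by
  have hl' : IsFactorization G₀ l' (A + V) := ⟨fun U hU => h.isAtomSeq U (mem_of_le hle hU), hV⟩
  obtain ⟨t, ht⟩ := (hl'.isZeroSumSeq.of_add hA.1.2).exists_isFactorization
  have hlt := h.card_add_lt l' hle V t hV ht
  refine ⟨t, ht, card_pos.2 ?_, hlt⟩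
  rintro rfl
  obtain rfl : 0 = V := ht.2
  rw [add_zero] at hl'
  rw [hl'.eq_singleton hA, card_zero, card_singleton] at hlt
  omega

lemma add_two_le_card (h : RemovalCosts G₀ A d l) (hd : 0 < d) (hA : IsAtomSeq G₀ A)
    (hle : l' ≤ l) (hcover : A ≤ l'.sum) : d + 2 ≤ card l' := by
  obtain ⟨V, hV⟩ := Multiset.le_iff_exists_add.1 hcover
  obtain ⟨t, -, hpos, hlt⟩ := h.exists_isFactorization hd hA hle hV
  omega

lemma isAtomSeq_of_sum_eq_add (h : RemovalCosts G₀ A d l) (hd : 0 < d) (hA : IsAtomSeq G₀ A)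
    (hle : l' ≤ l) (hcard : card l' ≤ d + 2) (hV : l'.sum = A + V) : IsAtomSeq G₀ V := by
  obtain ⟨t, ht, hpos, hlt⟩ := h.exists_isFactorization hd hA hle hV
  obtain ⟨U, rfl⟩ := card_eq_one.1 (show card t = 1 by omega)
  obtain rfl : U = V := by simpa using ht.2
  exact ht.1 U (mem_singleton_self U)

lemma card_inter_le_one [DecidableEq G] (h : RemovalCosts G₀ A d l) (hd : 0 < d)
    (hA : IsAtomSeq G₀ A) (hcard : card A ≤ d + 2) (hcover : A ≤ l.sum) (hU : U ∈ l) :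
    card (A ∩ U) ≤ 1 := by
  obtain ⟨l', hle, hl', hcover'⟩ := exists_subfamily_card_add_card_inter_le hcover hU
  have := h.add_two_le_card hd hA hle hcover'
  omega

lemma nodup_of_subset (h : RemovalCosts G₀ A d l) (hd : 0 < d) (hA : IsAtomSeq G₀ A)
    (hcard : card A ≤ d + 2) (hcover : A ≤ l.sum) (hle : l' ≤ l) (hl' : card l' ≤ d + 2)
    (hV : l'.sum = A + V) (hsub : A ⊆ V) : A.Nodup := by
  classical
  refine nodup_iff_count_le_one.2 fun g => ?_
  by_cases hg : g ∈ A
  swap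
  · simp [count_eq_zero_of_notMem hg]
  have hgl : g ∈ l'.sum := hV ▸ mem_add.2 (.inl hg)
  obtain ⟨U, hU, hgU⟩ := mem_join.1 hgl
  have hinter := h.card_inter_le_one hd hA hcard hcover (mem_of_le hle hU)
  obtain ⟨s, rfl⟩ := exists_cons_of_mem hU
  obtain ⟨x, hx⟩ : ∃ x, count x s.sum < count x A := by
    by_contra! hs
    have := h.add_two_le_card hd hA ((le_cons_self s U).trans hle) (le_iff_count.2 hs)
    rw [card_cons] at hl'
    omega
  have hxA : x ∈ A := count_pos.1 (by omega)
  have hxU : 2 ≤ count x U := by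
    have hxV := count_pos.2 (hsub hxA)
    have hsplit := congrArg (count x) hV
    rw [sum_cons, count_add, count_add] at hsplit
    omega
  have hgx : g = x := by
    by_contra hne
    have hxU' : x ∈ U := count_pos.1 (two_pos.trans_le hxU)
    have hpair : {g, x} ≤ A ∩ U :=
      (le_iff_subset (by simpa using hne)).2 (by simp [hg, hgU, hxA, hxU'])
    have := card_le_card hpair
    rw [card_pair] at this
    omega
  subst hgx
  have := (count_le_card g (A ∩ U)).trans hinter
  rw [count_inter] at this
  omega

end RemovalCosts

end RemovalCosts

section MinNonHalfFactorial

variable {G : Type*} [AddCommGroup G] {G₀ : Set G} {A U W : Multiset G} {d : ℕ} {g h : G}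
  {l : Multiset (Multiset G)}

lemma IsMinNonHalfFactorial.crossNumber_eq_one (hmin : IsMinNonHalfFactorial G₀)
    (hfin : ∀ x ∈ G₀, IsOfFinAddOrder x) (hg : g ∈ G₀) (hU : IsAtomSeq (G₀ \ {g}) U) :
    crossNumber U = 1 :=
  hU.crossNumber_eq_one (hmin.2 _ (Set.sdiff_singleton_ssubset.2 hg))
    fun x hx => hfin x (hU.1.1 x hx).1

lemma IsMinNonHalfFactorial.mem_of_crossNumber_ne_one (hmin : IsMinNonHalfFactorial G₀)
    (hfin : ∀ x ∈ G₀, IsOfFinAddOrder x) (hU : IsAtomSeq G₀ U) (hk : crossNumber U ≠ 1)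
    (hg : g ∈ G₀) : g ∈ U := by
  by_contra hgU
  refine hk (hmin.crossNumber_eq_one hfin hg (hU.of_forall_mem fun x hx => ⟨hU.1.1 x hx, ?_⟩))
  rintro rfl
  exact hgU hx

theorem IsMinNonHalfFactorial.not_removalCosts (hmin : IsMinNonHalfFactorial G₀)
    (hLCN : IsLCNSet G₀) (hfin : ∀ x ∈ G₀, IsOfFinAddOrder x) (hA : IsAtomSeq G₀ A)
    (hkA : crossNumber A = 1) (hd : 0 < d) (hcard : card A ≤ d + 2) (hcover : A ≤ l.sum) :
    ¬RemovalCosts G₀ A d l := by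
  intro h
  obtain ⟨l', hle, hl', hcover'⟩ := exists_subfamily_card_le hcover
  obtain ⟨V, hV⟩ := Multiset.le_iff_exists_add.1 hcover'
  have hVatom := h.isAtomSeq_of_sum_eq_add hd hA hle (hl'.trans hcard) hV
  have hkV : crossNumber V ≠ 1 := by
    have hthree : (3 : ℚ) ≤ card l' := by
      have := h.add_two_le_card hd hA hle hcover'
      exact_mod_cast (by omega : 3 ≤ card l')
    have hk := card_le_crossNumber_sum fun U hU => hLCN U (h.isAtomSeq U (mem_of_le hle hU))
    rw [hV, crossNumber_add, hkA] at hk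
    linarith
  have hsub : A ⊆ V := fun x hx => hmin.mem_of_crossNumber_ne_one hfin hVatom hkV (hA.1.1 x hx)
  have hnodup := h.nodup_of_subset hd hA hcard hcover hle (hl'.trans hcard) hV hsub
  rw [← hVatom.eq_of_le ((le_iff_subset hnodup).2 hsub) hA.2.1 hA.1.2] at hkV
  exact hkV hkA

-- With `j = (ord h - 1) * m`, where `m` is the multiplicity of `h` in `W`, the multiplicity of `h`
-- in `j • A + W` is `ord h * m`, so this sequence splits into copies of `h ^ ord h` and a
-- sequence over `G₀ \ {h}`.
lemma exists_isFactorization_nsmul_add_of_count_eq_one [DecidableEq G]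
    (hfin : ∀ x ∈ G₀, IsOfFinAddOrder x)
    (hone : ∀ U, IsAtomSeq (G₀ \ {h}) U → crossNumber U = 1) (hA : IsZeroSumSeq G₀ A)
    (hkA : crossNumber A = 1) (hcount : count h A = 1) (hW : IsZeroSumSeq G₀ W) :
    ∃ (j : ℕ) (l : Multiset (Multiset G)),
      IsFactorization G₀ l (j • A + W) ∧ (card l : ℚ) = j + crossNumber W := by
  have hh : h ∈ G₀ := hA.1 h (count_pos.1 (hcount ▸ one_pos))
  obtain ⟨p, hp⟩ := Nat.exists_eq_add_of_le' (hfin h hh).addOrderOf_pos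
  set m := count h W
  set B := (p * m) • A + W with hB
  have hBzero : IsZeroSumSeq G₀ B :=
    (zeroSumMonoid G₀).add_mem ((zeroSumMonoid G₀).nsmul_mem hA _) hW
  have hsplit : m • replicate (addOrderOf h) h + B.filter (· ≠ h) = B := by
    have hcountB : count h B = m * addOrderOf h := by
      rw [hB, count_add, count_nsmul, hcount, hp]
      ring
    rw [nsmul_replicate, ← hcountB, ← filter_eq', filter_add_not]
  have hatom := isAtomSeq_replicate_addOrderOf hh (hfin h hh)
  have hrest : IsZeroSumSeq (G₀ \ {h}) (B.filter (· ≠ h)) := by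
    refine ⟨fun x hx => ⟨hBzero.1 x (mem_of_mem_filter hx), of_mem_filter (p := (· ≠ h)) hx⟩, ?_⟩
    rw [← hsplit] at hBzero
    exact (hBzero.of_add ((zeroSumMonoid G₀).nsmul_mem hatom.1 m).2).2
  obtain ⟨t, ht⟩ := hrest.exists_isFactorization
  have hl := (hatom.isFactorization_replicate m).add (ht.mono Set.sdiff_subset)
  rw [hsplit] at hl
  refine ⟨p * m, _, hl, ?_⟩
  rw [← crossNumber_sum_eq_card, hl.2, hB, crossNumber_add, crossNumber_nsmul, hkA, mul_one]
  intro U hU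
  rcases mem_add.1 hU with hU | hU
  · rw [eq_of_mem_replicate hU, crossNumber_replicate_addOrderOf (hfin h hh)]
  · exact hone U (ht.1 U hU)

lemma removalCosts_of_forall_card_le {j : ℕ} (hA : IsAtomSeq G₀ A)
    (hW : IsAtomSeq G₀ W) (hl : IsFactorization G₀ l ((j + 1) • A + W)) (hlong : j + 2 < card l)
    (hshort : ∀ t, IsFactorization G₀ t (j • A + W) → card t ≤ j + 1) :
    RemovalCosts G₀ A (sInf (DeltaSet G₀)) l := by
  have hgap : j + 2 + sInf (DeltaSet G₀) ≤ card l := by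
    refine add_sInf_deltaSet_le ⟨replicate (j + 1) A + {W}, by simp, ?_⟩ ⟨l, rfl, hl⟩ hlong
    exact (hA.isFactorization_replicate (j + 1)).add
      (by simpa using hW.isFactorization_replicate 1)
  refine ⟨hl.1, fun l' hle V t hV ht => ?_⟩
  obtain ⟨s, rfl⟩ := Multiset.le_iff_exists_add.1 hle
  have hts : IsFactorization G₀ (t + s) (j • A + W) := by
    refine ⟨fun U hU => (mem_add.1 hU).elim (ht.1 U) fun hU => hl.1 U (mem_add.2 (.inr hU)), ?_⟩
    have hsum := hl.2
    rw [sum_add, hV, succ_nsmul'] at hsum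
    rw [sum_add, ht.2]
    exact add_left_cancel (a := A) (by rw [← add_assoc, hsum, add_assoc])
  have := hshort _ hts
  rw [card_add] at this hgap
  omega

theorem exists_removalCosts (hA : IsAtomSeq G₀ A) (hW : IsAtomSeq G₀ W)
    (hex : ∃ j l, IsFactorization G₀ l (j • A + W) ∧ j + 1 < card l) :
    ∃ l, A ≤ l.sum ∧ RemovalCosts G₀ A (sInf (DeltaSet G₀)) l := by
  classical
  obtain ⟨l, hl, hlong⟩ := Nat.find_spec hex
  obtain ⟨j, hj⟩ : ∃ j, Nat.find hex = j + 1 := by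
    refine Nat.exists_eq_succ_of_ne_zero fun hzero => ?_
    rw [hzero, zero_nsmul, zero_add] at hl
    simp [hl.eq_singleton hW] at hlong
  rw [hj] at hl hlong
  refine ⟨l, ?_, removalCosts_of_forall_card_le hA hW hl hlong fun t ht => ?_⟩
  · rw [hl.2, succ_nsmul', add_assoc]
    exact le_add_right A _
  · by_contra! hlt
    exact Nat.find_min hex (hj ▸ j.lt_succ_self) ⟨t, ht, hlt⟩

theorem IsMinNonHalfFactorial.two_le_count [DecidableEq G] (hmin : IsMinNonHalfFactorial G₀)
    (hLCN : IsLCNSet G₀) (hfin : ∀ x ∈ G₀, IsOfFinAddOrder x) (hA : IsAtomSeq G₀ A)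
    (hkA : crossNumber A = 1) (hcard : card A ≤ sInf (DeltaSet G₀) + 2) (hg : g ∈ A) :
    2 ≤ count g A := by
  by_contra! hlt
  have hcount : count g A = 1 := le_antisymm (by omega) (count_pos.2 hg)
  obtain ⟨W, hW, hkW⟩ := exists_isAtomSeq_crossNumber_ne_one hmin.1
  obtain ⟨j, l, hl, hcross⟩ := exists_isFactorization_nsmul_add_of_count_eq_one hfin
    (fun U => hmin.crossNumber_eq_one hfin (hA.1.1 g hg)) hA.1 hkA hcount hW.1
  have hlong : j + 1 < card l := by
    have hlt : 1 < crossNumber W := (hLCN W hW).lt_of_ne' hkW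
    exact_mod_cast (by linarith : (j + 1 : ℚ) < card l)
  obtain ⟨l, hcover, hremove⟩ := exists_removalCosts hA hW ⟨j, l, hl, hlong⟩
  exact hmin.not_removalCosts hLCN hfin hA hkA (sInf_deltaSet_pos hmin.1) hcard hcover hremove

end MinNonHalfFactorial

theorem stmt_13_general {G : Type*} [AddCommGroup G] [DecidableEq G]
    (hG : AddMonoid.ExponentExists G) (G₀ : Set G) (hmin : IsMinNonHalfFactorial G₀)
    (hLCN : IsLCNSet G₀) (hgap : AddMonoid.exponent G ≤ sInf (DeltaSet G₀) + 2) :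
    ∀ A : Multiset G, IsAtomSeq G₀ A → crossNumber A = 1 →
      (A.toFinset.card : ℚ) ≤ (AddMonoid.exponent G : ℚ) / 2 := by
  intro A hA hkA
  have hcard : card A ≤ AddMonoid.exponent G := by
    have hle := card_le_exponent_mul_crossNumber hG A
    rw [hkA, mul_one] at hle
    exact_mod_cast hle
  have htwo : 2 * A.toFinset.card ≤ AddMonoid.exponent G :=
    (two_mul_card_toFinset_le_card fun g =>
      hmin.two_le_count hLCN (fun x _ => hG.isOfFinAddOrder) hA hkA (hcard.trans hgap)).trans hcard
  rw [le_div_iff₀' two_pos]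
  exact_mod_cast htwo

/-- If `G₀` is a minimal non-half-factorial LCN-set with
`min Δ(G₀) = max Δ*(G)`, then every atom `A` over `G₀` with `k(A) = 1` satisfies
`|supp(A)| ≤ exp(G)/2`. -/
theorem stmt_13 {G : Type*} [AddCommGroup G] [Fintype G] [DecidableEq G] (G₀ : Set G)
    (hmin : IsMinNonHalfFactorial G₀) (hLCN : IsLCNSet G₀)
    (hmax : sInf (DeltaSet G₀) = sSup (DeltaStar G)) :
    ∀ A : Multiset G, IsAtomSeq G₀ A → crossNumber A = 1 →
      (A.toFinset.card : ℚ) ≤ (AddMonoid.exponent G : ℚ) / 2 :=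
  stmt_13_general .of_finite G₀ hmin hLCN (hmax ▸ exponent_le_sSup_deltaStar_add_two G)
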